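/- Let G be a finite nonabelian group, let m = |G : Z(G)| be the index of the center, and let p be the smallest prime divisor of m. Then for every integer n ≥ 0, (m(n+1) − n) · |G|^{n+1} ≤ m^{n+1} · |Hom(ℤ^{n+1}, G)| and p^{2n+1} · |Hom(ℤ^{n+1}, G)| ≤ (p^{n+1} + p^n − 1) · |G|^{n+1} (equivalently, (mn + m − n)/m^{n+1} ≤ P_2(G, n+1) ≤ (p^{n+1} + p^n − 1)/p^{2n+1}, where P_2(G,s) = |Hom(ℤ^s,G)|/|G|^s). -/

import Mathlib

open Subgroup

/-- The pairwise commuting `s`-tuples of elements of `G`. -/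
abbrev CommutingTuple (G : Type*) [Group G] (s : ℕ) : Type _ :=
  {t : Fin s → G // ∀ i j, Commute (t i) (t j)}

namespace CommutingTuple

variable {G : Type*} [Group G]

/-- A commuting `(s + 1)`-tuple is an element `g` together with a commuting `s`-tuple of elements
commuting with `g`. -/
def consEquiv (s : ℕ) : CommutingTuple G (s + 1) ≃
    Σ g : G, {t : CommutingTuple G s // ∀ i, Commute g (t.1 i)} where
  toFun t := ⟨t.1 0, ⟨Fin.tail t.1, fun i j => t.2 i.succ j.succ⟩, fun i => t.2 0 i.succ⟩
  invFun x := ⟨Fin.cons x.1 x.2.1.1, fun i j => by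
    obtain ⟨g, ⟨t, ht⟩, hg⟩ := x
    refine Fin.cases ?_ (fun i => ?_) i <;> refine Fin.cases ?_ (fun j => ?_) j
    · exact Commute.refl g
    · exact hg j
    · exact (hg i).symm
    · exact ht i j⟩
  left_inv t := Subtype.ext (Fin.cons_self_tail t.1)
  right_inv _ := rfl

theorem card_fiber_of_mem_center (s : ℕ) {g : G} (hg : g ∈ center G) :
    Nat.card {t : CommutingTuple G s // ∀ i, Commute g (t.1 i)} =
      Nat.card (CommutingTuple G s) :=
  Nat.card_congr <| Equiv.subtypeUnivEquiv fun t i => (mem_center_iff.1 hg (t.1 i)).symm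

theorem card_fiber_le [Finite G] (s : ℕ) (g : G) :
    Nat.card {t : CommutingTuple G s // ∀ i, Commute g (t.1 i)} ≤
      Nat.card (centralizer {g}) ^ s := by
  have h := Nat.card_le_card_of_injective
    (fun (x : {t : CommutingTuple G s // ∀ i, Commute g (t.1 i)}) (i : Fin s) =>
      (⟨x.1.1 i, mem_centralizer_singleton_iff.2 (x.2 i).symm⟩ : centralizer {g}))
    (fun x y hxy => Subtype.ext <| Subtype.ext <| funext fun i =>
      congrArg Subtype.val (congrFun hxy i))
  simpa [Nat.card_fun] using h

theorem card_center_pow_le_card_fiber [Finite G] (s : ℕ) (g : G) :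
    Nat.card (center G) ^ s ≤
      Nat.card {t : CommutingTuple G s // ∀ i, Commute g (t.1 i)} := by
  have h := Nat.card_le_card_of_injective
    (fun t : Fin s → center G =>
      (⟨⟨fun i => (t i).1, fun i j => (mem_center_iff.1 (t j).2 _)⟩,
        fun i => mem_center_iff.1 (t i).2 g⟩ :
        {t : CommutingTuple G s // ∀ i, Commute g (t.1 i)}))
    (fun x y hxy => funext fun i => Subtype.ext <|
      congrFun (congrArg (fun u => u.1.1) hxy) i)
  simpa [Nat.card_fun] using h

open Classical in
theorem card_succ [Fintype G] (s : ℕ) :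
    Nat.card (CommutingTuple G (s + 1)) =
      Nat.card (center G) * Nat.card (CommutingTuple G s) +
        ∑ g : G with g ∉ center G,
          Nat.card {t : CommutingTuple G s // ∀ i, Commute g (t.1 i)} := by
  rw [Nat.card_congr (consEquiv s), Nat.card_sigma,
    ← Finset.sum_filter_add_sum_filter_not Finset.univ (· ∈ center G)]
  congr 1
  rw [Finset.sum_congr rfl fun g hg => card_fiber_of_mem_center s (Finset.mem_filter.1 hg).2,
    Finset.sum_const, smul_eq_mul, Nat.card_eq_fintype_card (α := center G),
    Fintype.card_subtype]

open Classical in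
theorem card_center_add_card_noncentral [Fintype G] :
    Nat.card (center G) + (Finset.univ.filter fun g : G => g ∉ center G).card = Nat.card G := by
  rw [Nat.card_eq_fintype_card, Fintype.card_subtype, Finset.card_filter_add_card_filter_not,
    Nat.card_eq_fintype_card, Finset.card_univ]

theorem card_one : Nat.card (CommutingTuple G 1) = Nat.card G :=
  Nat.card_congr <| (Equiv.subtypeUnivEquiv fun t i j => by
    rw [Subsingleton.elim i j]).trans (Equiv.funUnique (Fin 1) G)

theorem le_card [Finite G] {k : ℕ} (hk : Nat.card G = (k + 1) * Nat.card (center G)) (n : ℕ) :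
    (k * (n + 1) + 1) * Nat.card (center G) ^ (n + 1) ≤
      Nat.card (CommutingTuple G (n + 1)) := by
  classical
  have := Fintype.ofFinite G
  induction n with
  | zero => rw [card_one, hk]; simp
  | succ n ih =>
    have hw : (Finset.univ.filter fun g : G => g ∉ center G).card = k * Nat.card (center G) := by
      have := card_center_add_card_noncentral (G := G)
      lia
    have hsum := Finset.card_nsmul_le_sum (Finset.univ.filter fun g : G => g ∉ center G) _ _
      fun g _ => card_center_pow_le_card_fiber (n + 1) g
    rw [hw, smul_eq_mul] at hsum
    rw [card_succ]
    calc (k * (n + 1 + 1) + 1) * Nat.card (center G) ^ (n + 1 + 1)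
        = Nat.card (center G) * ((k * (n + 1) + 1) * Nat.card (center G) ^ (n + 1)) +
          k * Nat.card (center G) * Nat.card (center G) ^ (n + 1) := by ring
      _ ≤ _ := by gcongr

theorem card_le [Finite G] {p : ℕ} (hp : 0 < p)
    (hcent : ∀ g : G, g ∉ center G → p * Nat.card (centralizer {g}) ≤ Nat.card G)
    (hsq : p ^ 2 * Nat.card (center G) ≤ Nat.card G) (n : ℕ) :
    p ^ (2 * n + 1) * Nat.card (CommutingTuple G (n + 1)) ≤
      (p ^ (n + 1) + p ^ n - 1) * Nat.card G ^ (n + 1) := by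
  classical
  have := Fintype.ofFinite G
  induction n with
  | zero => rw [card_one]; simp
  | succ n ih =>
    have hsplit := card_center_add_card_noncentral (G := G)
    have hsum : p ^ (n + 1) * ∑ g : G with g ∉ center G,
        Nat.card {t : CommutingTuple G (n + 1) // ∀ i, Commute g (t.1 i)} ≤
        (Finset.univ.filter fun g : G => g ∉ center G).card * Nat.card G ^ (n + 1) := by
      rw [Finset.mul_sum, ← smul_eq_mul (Finset.card _)]
      refine Finset.sum_le_card_nsmul _ _ _ fun g hg => ?_
      calc _ ≤ p ^ (n + 1) * Nat.card (centralizer {g}) ^ (n + 1) := by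
            gcongr; exact card_fiber_le (n + 1) g
        _ = (p * Nat.card (centralizer {g})) ^ (n + 1) := (mul_pow ..).symm
        _ ≤ _ := by gcongr; exact hcent g (Finset.mem_filter.1 hg).2
    rw [card_succ]
    set z := Nat.card (center G)
    set a := Nat.card G
    set w := (Finset.univ.filter fun g : G => g ∉ center G).card
    set S := ∑ g : G with g ∉ center G,
        Nat.card {t : CommutingTuple G (n + 1) // ∀ i, Commute g (t.1 i)}
    obtain ⟨D, hD⟩ : ∃ D, p ^ (n + 1) = D + 1 :=
      Nat.exists_eq_succ_of_ne_zero (pow_pos hp _).ne'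
    have hF : p ^ (n + 1) + p ^ n - 1 = p ^ n + D := by lia
    have hF' : p ^ (n + 1 + 1) + p ^ (n + 1) - 1 = p ^ (n + 2) + D := by lia
    rw [hF] at ih
    rw [hF']
    calc p ^ (2 * (n + 1) + 1) * (z * Nat.card (CommutingTuple G (n + 1)) + S)
        = p ^ 2 * z * (p ^ (2 * n + 1) * Nat.card (CommutingTuple G (n + 1))) +
          p ^ (n + 2) * (p ^ (n + 1) * S) := by ring
      _ ≤ p ^ 2 * z * ((p ^ n + D) * a ^ (n + 1)) + p ^ (n + 2) * (w * a ^ (n + 1)) := by gcongr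
      _ = (p ^ (n + 2) * (z + w) + p ^ 2 * z * D) * a ^ (n + 1) := by ring
      _ ≤ (p ^ (n + 2) * a + a * D) * a ^ (n + 1) := by rw [hsplit]; gcongr
      _ = (p ^ (n + 2) + D) * a ^ (n + 1 + 1) := by ring

end CommutingTuple

/-- The index of the center of a group is never prime. -/
theorem Subgroup.not_prime_index_center {G : Type*} [Group G] :
    ¬ (center G).index.Prime := by
  intro h
  have := Fact.mk h
  have : IsCyclic (G ⧸ center G) := isCyclic_of_prime_card (p := (center G).index) rfl
  have hcomm : IsMulCommutative G :=
    (QuotientGroup.mk' (center G)).isMulCommutative_of_isCyclic_of_ker_le_center (by simp)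
  refine h.one_lt.ne' (index_eq_one.2 ?_)
  exact eq_top_iff.2 fun a _ => mem_center_iff.2 fun b => hcomm.is_comm.comm b a

theorem Nat.sq_le_of_isLeast_prime_dvd {m p : ℕ} (hm : m ≠ 0) (hnp : ¬ m.Prime)
    (hp : IsLeast {q : ℕ | q.Prime ∧ q ∣ m} p) : p ^ 2 ≤ m := by
  obtain ⟨⟨hpp, d, rfl⟩, hmin⟩ := hp
  have hd : d ≠ 1 := by rintro rfl; exact hnp (by simpa using hpp)
  have hle : p ≤ d.minFac := hmin ⟨Nat.minFac_prime hd, (Nat.minFac_dvd d).mul_left p⟩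
  rw [sq]
  exact Nat.mul_le_mul_left p
    (hle.trans (Nat.minFac_le (Nat.pos_of_ne_zero (right_ne_zero_of_mul hm))))

theorem Subgroup.mul_card_centralizer_le {G : Type*} [Group G] [Finite G] {p : ℕ}
    (hp : p ∈ lowerBounds {q : ℕ | q.Prime ∧ q ∣ (center G).index}) {g : G}
    (hg : g ∉ center G) : p * Nat.card (centralizer {g}) ≤ Nat.card G := by
  have hne : (centralizer {g}).index ≠ 1 := fun h => hg <| mem_center_iff.2 fun x =>
    mem_centralizer_singleton_iff.1 (index_eq_one.1 h ▸ mem_top x)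
  have hdvd := index_dvd_of_le (center_le_centralizer ({g} : Set G))
  have hle : p ≤ (centralizer {g}).index :=
    (hp ⟨Nat.minFac_prime hne, (Nat.minFac_dvd _).trans hdvd⟩).trans
      (Nat.minFac_le (Nat.pos_of_ne_zero index_ne_zero_of_finite))
  rw [← index_mul_card (centralizer {g})]
  gcongr


/-- Let `G` be a finite nonabelian group, `m = |G : Z(G)|`, and `p` the
smallest prime divisor of `m`.  Then for every `n ≥ 0`,
`(m(n+1) − n)·|G|^{n+1} ≤ m^{n+1}·|Hom(ℤ^{n+1}, G)|` and
`p^{2n+1}·|Hom(ℤ^{n+1}, G)| ≤ (p^{n+1} + p^n − 1)·|G|^{n+1}`; equivalently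
`(mn + m − n)/m^{n+1} ≤ P_2(G,n+1) ≤ (p^{n+1} + p^n − 1)/p^{2n+1}`. -/
theorem stmt_17 {G : Type*} [Group G] [Fintype G]
    (hna : ∃ a b : G, a * b ≠ b * a)
    (m : ℕ) (hm : m = (Subgroup.center G).index)
    (p : ℕ) (hp : IsLeast {q : ℕ | q.Prime ∧ q ∣ m} p)
    (n : ℕ) :
    (m * (n + 1) - n) * (Nat.card G) ^ (n + 1)
        ≤ m ^ (n + 1) * Nat.card {t : Fin (n + 1) → G // ∀ i j, Commute (t i) (t j)}
      ∧ p ^ (2 * n + 1) * Nat.card {t : Fin (n + 1) → G // ∀ i j, Commute (t i) (t j)}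
        ≤ (p ^ (n + 1) + p ^ n - 1) * (Nat.card G) ^ (n + 1) := by
  have hm0 : m ≠ 0 := hm ▸ index_ne_zero_of_finite
  have hcard : m * Nat.card (center G) = Nat.card G := hm ▸ index_mul_card _
  constructor
  · obtain ⟨k, rfl⟩ := Nat.exists_eq_add_one_of_ne_zero hm0
    have hcoef : (k + 1) * (n + 1) - n = k * (n + 1) + 1 := by
      rw [Nat.sub_eq_iff_eq_add (by nlinarith)]; ring
    calc ((k + 1) * (n + 1) - n) * Nat.card G ^ (n + 1)
        = (k + 1) ^ (n + 1) * ((k * (n + 1) + 1) * Nat.card (center G) ^ (n + 1)) := by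
          rw [hcoef, ← hcard, mul_pow]; ring
      _ ≤ _ := Nat.mul_le_mul_left _ (CommutingTuple.le_card hcard.symm n)
  · have hsq := Nat.sq_le_of_isLeast_prime_dvd hm0 (hm ▸ not_prime_index_center) hp
    refine CommutingTuple.card_le hp.1.1.pos (fun g hg => ?_) ?_ n
    · exact mul_card_centralizer_le (hm ▸ hp.2) hg
    · rw [← hcard]; gcongr
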